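/- There do not exist a nonempty open set V ⊆ {(R₁,R₂) ∈ ℝ² : R₁ ≠ R₂}, functions C₁, C₂ : ℝ → ℝ, and differentiable functions φ₁, φ₂ : V → ℝ such that for all (R₁,R₂) ∈ V and all x, y ∈ ℝ: −(R₁ − R₂)·(∂₂φ₁(R₁,R₂) − ∂₁φ₂(R₁,R₂))·x·y + (3/2)·C₁(R₁)·x² + (3/2)·C₂(R₂)·y² = ((R₁ − R₂)⁶/384)·(x + y)². -/

import Mathlib

/-!
Evaluating the identity at `x = 1`, `y = 0` isolates the coefficient of `x²`:
`(3/2) C₁(R₁) = (R₁ − R₂)⁶/384` on `V`. The left side does not depend on `R₂`, whereas the right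
side is not constant in `R₂` on any interval. The contradiction is obtained by comparing the three
points `(R₁, R₂)`, `(R₁, R₂ ± t)` of `V` for a small `t > 0`.
-/

/-- Partial derivative in the `i`-th coordinate direction. -/
noncomputable def pd {n : ℕ} (i : Fin n) (f : (Fin n → ℝ) → ℝ) (x : Fin n → ℝ) : ℝ :=
  fderiv ℝ f x (Pi.single i 1)

/-- Non-integrability of the water-wave equations: the second-order Hamiltonian density
`((R₁−R₂)⁶/384)((R₁)ₓ + (R₂)ₓ)²` cannot be put in the quasi-trivial normal form. -/
theorem stmt_14 :
    ¬ ∃ (V : Set (Fin 2 → ℝ)) (C₁ C₂ : ℝ → ℝ) (φ₁ φ₂ : (Fin 2 → ℝ) → ℝ),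
      IsOpen V ∧ V.Nonempty ∧ V ⊆ {p : Fin 2 → ℝ | p 0 ≠ p 1} ∧
      DifferentiableOn ℝ φ₁ V ∧ DifferentiableOn ℝ φ₂ V ∧
      ∀ p ∈ V, ∀ x y : ℝ,
        -((p 0 - p 1) * (pd 1 φ₁ p - pd 0 φ₂ p)) * x * y
          + (3 / 2) * C₁ (p 0) * x ^ 2 + (3 / 2) * C₂ (p 1) * y ^ 2
          = ((p 0 - p 1) ^ 6 / 384) * (x + y) ^ 2 := by
  rintro ⟨V, C₁, C₂, φ₁, φ₂, hV, ⟨p, hp⟩, -, -, -, h⟩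
  have key : ∀ q ∈ V, (3 / 2) * C₁ (q 0) = (q 0 - q 1) ^ 6 / 384 := by
    intro q hq
    have := h q hq 1 0
    linarith
  obtain ⟨ε, hε, hball⟩ := Metric.isOpen_iff.1 hV p hp
  have mem : ∀ t : ℝ, |t| < ε → ![p 0, p 1 + t] ∈ V := by
    intro t ht
    apply hball
    rw [Metric.mem_ball, dist_pi_lt_iff hε]
    intro i
    fin_cases i
    · simpa using hε
    · simpa [Real.dist_eq] using ht
  have shift : ∀ t : ℝ, |t| < ε → (p 0 - (p 1 + t)) ^ 2 = (p 0 - p 1) ^ 2 := by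
    intro t ht
    have h1 := key _ (mem t ht)
    have h0 := key p hp
    simp only [Matrix.cons_val_zero, Matrix.cons_val_one] at h1
    -- Cubing is injective on nonnegative reals, so equal sixth powers have equal squares.
    refine (pow_left_inj₀ (sq_nonneg _) (sq_nonneg _) three_ne_zero).1 ?_
    linarith
  have hpos : |ε / 2| < ε := by rw [abs_of_pos (half_pos hε)]; linarith
  have hneg : |-(ε / 2)| < ε := by rwa [abs_neg]
  -- With `d = R₁ − R₂` and `t = ε / 2`, adding `(d ± t)² = d²` gives `2 t² = 0`.
  nlinarith [shift _ hpos, shift _ hneg, sq_pos_of_pos hε]
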